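/- Let H ∈ (0, 1/2). There exists a positive constant C, depending only on H, such that for every T ≥ 1, ∫∫∫∫_{0<s<t<u<v<T} min(1, s^(2H−2)) · min(1, t^(2H−2)) · min(1, u^(2H−2)) · min(1, (v−s)^(H−1)) ds dt du dv ≤ C · T^H. -/

import Mathlib

open MeasureTheory Real Set

/-!
In the coordinates `(s, t, u, w)` with `w = v - s`, which preserve Lebesgue measure, the simplex
lies in the box `(0, ∞)³ × (0, T]` and the integrand is a product of functions of one variable. The
first three factors are integrable on `(0, ∞)` because `2 * H - 2 < -1`, and the last one
contributes at most `∫ w in (0, T], w ^ (H - 1) = T ^ H / H`.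
-/

section MinOneRpow

variable {a : ℝ}

lemma min_one_rpow_nonneg {x : ℝ} (hx : 0 ≤ x) : 0 ≤ min 1 (x ^ a) :=
  le_min zero_le_one (rpow_nonneg hx a)

lemma integrableOn_Ioc_min_one_rpow (a T : ℝ) :
    IntegrableOn (fun x : ℝ ↦ min 1 (x ^ a)) (Ioc 0 T) := by
  refine Measure.integrableOn_of_bounded (M := 1) (by simp)
    (Measurable.aestronglyMeasurable (by fun_prop)) ?_
  filter_upwards [ae_restrict_mem measurableSet_Ioc] with x hx
  rw [norm_of_nonneg (min_one_rpow_nonneg hx.1.le)]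
  exact min_le_left _ _

lemma eqOn_min_one_rpow_Ioc_zero_one (ha : a ≤ 0) :
    EqOn (fun x : ℝ ↦ min 1 (x ^ a)) (fun _ ↦ 1) (Ioc 0 1) :=
  fun _ hx ↦ min_eq_left (one_le_rpow_of_pos_of_le_one_of_nonpos hx.1 hx.2 ha)

lemma eqOn_min_one_rpow_Ioi_one (ha : a ≤ 0) :
    EqOn (fun x : ℝ ↦ min 1 (x ^ a)) (fun x ↦ x ^ a) (Ioi 1) :=
  fun _ hx ↦ min_eq_right (rpow_le_one_of_one_le_of_nonpos (le_of_lt hx) ha)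

lemma integrableOn_Ioi_one_min_one_rpow (ha : a < -1) :
    IntegrableOn (fun x : ℝ ↦ min 1 (x ^ a)) (Ioi 1) :=
  (integrableOn_Ioi_rpow_of_lt ha one_pos).congr_fun
    (eqOn_min_one_rpow_Ioi_one (by linarith)).symm measurableSet_Ioi

lemma integrableOn_Ioi_min_one_rpow (ha : a < -1) :
    IntegrableOn (fun x : ℝ ↦ min 1 (x ^ a)) (Ioi 0) := by
  rw [← Ioc_union_Ioi_eq_Ioi zero_le_one]
  exact (integrableOn_Ioc_min_one_rpow a 1).union (integrableOn_Ioi_one_min_one_rpow ha)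

lemma integral_Ioi_min_one_rpow (ha : a < -1) :
    ∫ x in Ioi (0 : ℝ), min 1 (x ^ a) = a / (a + 1) := by
  have ha' : a ≤ 0 := by linarith
  have ha₁ : a + 1 ≠ 0 := by linarith
  calc ∫ x in Ioi (0 : ℝ), min 1 (x ^ a)
      = (∫ x in Ioc (0 : ℝ) 1, min 1 (x ^ a)) + ∫ x in Ioi (1 : ℝ), min 1 (x ^ a) := by
        rw [← Ioc_union_Ioi_eq_Ioi zero_le_one, setIntegral_union (Ioc_disjoint_Ioi le_rfl)
          measurableSet_Ioi (integrableOn_Ioc_min_one_rpow a 1)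
          (integrableOn_Ioi_one_min_one_rpow ha)]
    _ = (∫ _ in Ioc (0 : ℝ) 1, 1) + ∫ x in Ioi (1 : ℝ), x ^ a := by
        rw [setIntegral_congr_fun measurableSet_Ioc (eqOn_min_one_rpow_Ioc_zero_one ha'),
          setIntegral_congr_fun measurableSet_Ioi (eqOn_min_one_rpow_Ioi_one ha')]
    _ = 1 + -1 / (a + 1) := by
        rw [integral_Ioi_rpow_of_lt ha one_pos]
        simp
    _ = a / (a + 1) := by
        field_simp
        ring

lemma integral_Ioc_min_one_rpow_le {b T : ℝ} (hb : 0 < b) (hT : 0 ≤ T) :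
    ∫ x in Ioc 0 T, min 1 (x ^ (b - 1)) ≤ T ^ b / b := by
  have h_int : IntervalIntegrable (fun x : ℝ ↦ x ^ (b - 1)) volume 0 T :=
    intervalIntegral.intervalIntegrable_rpow' (by linarith)
  calc ∫ x in Ioc 0 T, min 1 (x ^ (b - 1))
      ≤ ∫ x in Ioc 0 T, x ^ (b - 1) :=
        setIntegral_mono (integrableOn_Ioc_min_one_rpow (b - 1) T)
          ((intervalIntegrable_iff_integrableOn_Ioc_of_le hT).1 h_int) fun _ ↦ min_le_right _ _
    _ = T ^ b / b := by
        rw [← intervalIntegral.integral_of_le hT, integral_rpow (.inl (by linarith))]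
        simp [zero_rpow hb.ne']

end MinOneRpow

section Shear

variable (G α β : Type*) [MeasurableSpace G] [AddGroup G] [MeasurableAdd₂ G] [MeasurableSub₂ G]
  [MeasurableSpace α] [MeasurableSpace β]

/-- The change of variables `(s, t, u, v) ↦ (s, t, u, v - s)`, which separates a kernel depending on
the difference of the outer coordinates. -/
def shearLast : G × α × β × G ≃ᵐ G × α × β × G where
  toFun p := (p.1, p.2.1, p.2.2.1, p.2.2.2 - p.1)
  invFun p := (p.1, p.2.1, p.2.2.1, p.2.2.2 + p.1)
  left_inv p := by simp
  right_inv p := by simp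
  measurable_toFun := by dsimp only [Equiv.coe_fn_mk]; fun_prop
  measurable_invFun := by dsimp only [Equiv.coe_fn_symm_mk]; fun_prop

variable {G α β}

lemma measurePreserving_shearLast (μ : Measure G) [SFinite μ] [μ.IsAddRightInvariant]
    (ν : Measure α) [SFinite ν] (ρ : Measure β) [SFinite ρ] :
    MeasurePreserving (shearLast G α β) (μ.prod (ν.prod (ρ.prod μ)))
      (μ.prod (ν.prod (ρ.prod μ))) := by
  have h_fibre (s : G) : MeasurePreserving (Prod.map id (Prod.map id (· - s)))
      (ν.prod (ρ.prod μ)) (ν.prod (ρ.prod μ)) :=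
    (MeasurePreserving.id ν).prod ((MeasurePreserving.id ρ).prod (measurePreserving_sub_right μ s))
  exact (MeasurePreserving.id μ).skew_product
    (g := fun s (q : α × β × G) ↦ (q.1, q.2.1, q.2.2 - s)) (by fun_prop)
    (.of_forall fun s ↦ (h_fibre s).map_eq)

end Shear

section OrderedSimplex

/-- The ordered simplex `{0 < s < t < u < v < T}`, in the right-nested product encoding of `ℝ⁴`. -/
def orderedSimplex (T : ℝ) : Set (ℝ × ℝ × ℝ × ℝ) :=
  {p | 0 < p.1 ∧ p.1 < p.2.1 ∧ p.2.1 < p.2.2.1 ∧ p.2.2.1 < p.2.2.2 ∧ p.2.2.2 < T}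

lemma orderedSimplex_subset_preimage_shearLast (T : ℝ) :
    orderedSimplex T ⊆
      shearLast ℝ ℝ ℝ ⁻¹' (Ioi 0 ×ˢ Ioi 0 ×ˢ Ioi 0 ×ˢ Ioc 0 T) := by
  rintro ⟨s, t, u, v⟩ ⟨hs, hst, htu, huv, hvT⟩
  simp only at hs hst htu huv hvT
  refine ⟨hs, hs.trans hst, (hs.trans hst).trans htu, ?_, ?_⟩ <;>
    simp only [shearLast, MeasurableEquiv.coe_mk, Equiv.coe_fn_mk] <;> linarith

variable {f g h k : ℝ → ℝ} {T : ℝ}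

lemma setIntegral_orderedSimplex_mul_le
    (hf : IntegrableOn f (Ioi 0)) (hg : IntegrableOn g (Ioi 0)) (hh : IntegrableOn h (Ioi 0))
    (hk : IntegrableOn k (Ioc 0 T)) (hf₀ : ∀ x > 0, 0 ≤ f x) (hg₀ : ∀ x > 0, 0 ≤ g x)
    (hh₀ : ∀ x > 0, 0 ≤ h x) (hk₀ : ∀ x ∈ Ioc 0 T, 0 ≤ k x) :
    ∫ p in orderedSimplex T, f p.1 * g p.2.1 * h p.2.2.1 * k (p.2.2.2 - p.1) ≤
      (∫ x in Ioi 0, f x) * (∫ x in Ioi 0, g x) * (∫ x in Ioi 0, h x) * ∫ x in Ioc 0 T, k x := by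
  let φ : ℝ × ℝ × ℝ × ℝ → ℝ := fun q ↦ f q.1 * (g q.2.1 * (h q.2.2.1 * k q.2.2.2))
  let box : Set (ℝ × ℝ × ℝ × ℝ) := Ioi 0 ×ˢ Ioi 0 ×ˢ Ioi 0 ×ˢ Ioc 0 T
  let shear := shearLast ℝ ℝ ℝ
  have h_shear : MeasurePreserving shear := measurePreserving_shearLast volume volume volume
  have h_box : MeasurableSet box := by measurability
  have hφ : IntegrableOn φ box := by
    simp only [IntegrableOn, box, Measure.volume_eq_prod, ← Measure.prod_restrict]
    exact hf.mul_prod (hg.mul_prod (hh.mul_prod hk))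
  have hφ₀ : ∀ q ∈ box, 0 ≤ φ q := fun q ⟨h₁, h₂, h₃, h₄⟩ ↦
    mul_nonneg (hf₀ _ h₁) (mul_nonneg (hg₀ _ h₂) (mul_nonneg (hh₀ _ h₃) (hk₀ _ h₄)))
  calc ∫ p in orderedSimplex T, f p.1 * g p.2.1 * h p.2.2.1 * k (p.2.2.2 - p.1)
      = ∫ p in orderedSimplex T, φ (shear p) := by
        simp only [mul_assoc]
        rfl
    _ ≤ ∫ p in shear ⁻¹' box, φ (shear p) := by
        refine setIntegral_mono_set
          ((h_shear.integrableOn_comp_preimage shear.measurableEmbedding).2 hφ) ?_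
          (orderedSimplex_subset_preimage_shearLast T).eventuallyLE
        filter_upwards [ae_restrict_mem (shear.measurable h_box)] with p hp
        exact hφ₀ _ hp
    _ = ∫ q in box, φ q := h_shear.setIntegral_preimage_emb shear.measurableEmbedding φ box
    _ = (∫ x in Ioi 0, f x) * (∫ x in Ioi 0, g x) * (∫ x in Ioi 0, h x) * ∫ x in Ioc 0 T, k x := by
        simp only [box, φ, Measure.volume_eq_prod]
        rw [setIntegral_prod_mul f (fun q : ℝ × ℝ × ℝ ↦ g q.1 * (h q.2.1 * k q.2.2)),
          setIntegral_prod_mul g (fun q : ℝ × ℝ ↦ h q.1 * k q.2), setIntegral_prod_mul h k]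
        ring

end OrderedSimplex

theorem fourth_cumulant_simplex_bound_general {a b c d : ℝ} (ha : a < -1) (hb : b < -1)
    (hc : c < -1) (hd : 0 < d) :
    ∃ C : ℝ, 0 < C ∧ ∀ T : ℝ, 0 ≤ T →
      (∫ p in orderedSimplex T,
        min 1 (p.1 ^ a) * min 1 (p.2.1 ^ b) * min 1 (p.2.2.1 ^ c)
          * min 1 ((p.2.2.2 - p.1) ^ (d - 1))) ≤ C * T ^ d := by
  have h_pos {e : ℝ} (he : e < -1) : 0 < e / (e + 1) :=
    div_pos_of_neg_of_neg (by linarith) (by linarith)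
  have hA : 0 < a / (a + 1) * (b / (b + 1)) * (c / (c + 1)) :=
    mul_pos (mul_pos (h_pos ha) (h_pos hb)) (h_pos hc)
  have h_nonneg (e : ℝ) : ∀ x > (0 : ℝ), 0 ≤ min 1 (x ^ e) := fun _ hx ↦ min_one_rpow_nonneg hx.le
  refine ⟨a / (a + 1) * (b / (b + 1)) * (c / (c + 1)) / d, div_pos hA hd, fun T hT ↦ ?_⟩
  have h_split := setIntegral_orderedSimplex_mul_le (integrableOn_Ioi_min_one_rpow ha)
    (integrableOn_Ioi_min_one_rpow hb) (integrableOn_Ioi_min_one_rpow hc)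
    (integrableOn_Ioc_min_one_rpow (d - 1) T) (h_nonneg a) (h_nonneg b) (h_nonneg c)
    fun x hx ↦ h_nonneg (d - 1) x hx.1
  rw [integral_Ioi_min_one_rpow ha, integral_Ioi_min_one_rpow hb, integral_Ioi_min_one_rpow hc]
    at h_split
  calc _ ≤ a / (a + 1) * (b / (b + 1)) * (c / (c + 1)) * ∫ x in Ioc 0 T, min 1 (x ^ (d - 1)) :=
        h_split
    _ ≤ a / (a + 1) * (b / (b + 1)) * (c / (c + 1)) * (T ^ d / d) := by
        gcongr
        exact integral_Ioc_min_one_rpow_le hd hT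
    _ = a / (a + 1) * (b / (b + 1)) * (c / (c + 1)) / d * T ^ d := by ring

/-- For `H ∈ (0,1/2)` there is `C > 0` (depending only on `H`) such that for all `T ≥ 1`,
`∫∫∫∫_{0<s<t<u<v<T} min(1,s^{2H-2}) min(1,t^{2H-2}) min(1,u^{2H-2}) min(1,(v-s)^{H-1})
  ds dt du dv ≤ C ⬝ T^H`. -/
theorem fourth_cumulant_simplex_bound (H : ℝ) (hH : H ∈ Set.Ioo (0 : ℝ) (1/2)) :
    ∃ C : ℝ, 0 < C ∧ ∀ T : ℝ, 1 ≤ T →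
      (∫ p in {p : ℝ × ℝ × ℝ × ℝ |
          0 < p.1 ∧ p.1 < p.2.1 ∧ p.2.1 < p.2.2.1 ∧ p.2.2.1 < p.2.2.2 ∧ p.2.2.2 < T},
        min 1 (p.1 ^ (2 * H - 2)) * min 1 (p.2.1 ^ (2 * H - 2))
          * min 1 (p.2.2.1 ^ (2 * H - 2))
          * min 1 ((p.2.2.2 - p.1) ^ (H - 1))) ≤ C * T ^ H :=
  have ha : 2 * H - 2 < -1 := by linarith [hH.2]
  have ⟨C, hC, h_bound⟩ := fourth_cumulant_simplex_bound_general ha ha ha hH.1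
  ⟨C, hC, fun T hT ↦ h_bound T (zero_le_one.trans hT)⟩
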